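/- For every integer Δ ≥ 3 and every intolerance parameter τ with 2/Δ < τ < 1, there exist a Δ-regular finite simple graph G = (V,E), a set A of agents with |A| < |V| partitioned into two types, and an improving response cycle for the one-versus-all jump Schelling game (1-k-JSG) with parameter τ on G; in particular, the 1-k-JSG for τ > 2/Δ on Δ-regular graphs is not a potential game. -/

import Mathlib

/-!
Four nodes in cyclic order, numbered by `ZMod 4`, form two edges `{1, 2}` and `{3, 0}`. The odd
endpoint of each edge, its hub, is also joined to a common set of nodes whose occupants never move:
one friend and `Δ - 2` foes of three like-typed agents that share the four nodes. Let the hole be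
at node `n`. The agent at `n + 1` wants to jump into it:
* if `n` is even, she leaves a hub, where two of her `Δ` neighbors are friends, for the other end
  of an edge with an occupied hub, where her only neighbor is a friend;
* if `n` is odd, she leaves a node without neighbors for a hub, where she has a friend.

So the hole travels around the four nodes forever, and after `12 = 3 * 4` jumps all agents are back.
The degrees in this graph are at most `Δ`, and any such graph is an induced subgraph of a
`Δ`-regular one, whose additional nodes stay empty and hence do not affect any cost.
-/

open Finset
open scoped Classical

noncomputable section

namespace Schelling

variable {V A : Type*} [Fintype V] [Fintype A] {k : ℕ}

/-- The set of neighbors of agent `a` under placement `p`. -/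
def nbrs (G : SimpleGraph V) (p : A → V) (a : A) : Finset A :=
  Finset.univ.filter fun b => G.Adj (p a) (p b)

/-- `|N⁺_p(a)|`: the number of neighbors of `a` under `p` having the same type as `a`. -/
def posCount (G : SimpleGraph V) (t : A → Fin k) (p : A → V) (a : A) : ℕ :=
  (Finset.univ.filter fun b => G.Adj (p a) (p b) ∧ t b = t a).card

/-- One-versus-all `|N⁻_p(a)|`: the number of neighbors of `a` whose type differs from `t a`. -/
def negCountAll (G : SimpleGraph V) (t : A → Fin k) (p : A → V) (a : A) : ℕ :=
  (Finset.univ.filter fun b => G.Adj (p a) (p b) ∧ t b ≠ t a).card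

/-- One-versus-one `|N⁻_p(a)|`: the size of a largest set of neighbors of `a`
of one common type different from `t a`. -/
def negCountOne (G : SimpleGraph V) (t : A → Fin k) (p : A → V) (a : A) : ℕ :=
  (Finset.univ.filter fun T : Fin k => T ≠ t a).sup fun T =>
    (Finset.univ.filter fun b => G.Adj (p a) (p b) ∧ t b = T).card

/-- The cost of agent `a` in the one-versus-all version. -/
def costAll (G : SimpleGraph V) (t : A → Fin k) (τ : ℝ) (p : A → V) (a : A) : ℝ :=
  if nbrs G p a = ∅ then τ
  else max 0 (τ - (posCount G t p a : ℝ) /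
    ((posCount G t p a : ℝ) + (negCountAll G t p a : ℝ)))

/-- The cost of agent `a` in the one-versus-one version. -/
def costOne (G : SimpleGraph V) (t : A → Fin k) (τ : ℝ) (p : A → V) (a : A) : ℝ :=
  if nbrs G p a = ∅ then τ
  else max 0 (τ - (posCount G t p a : ℝ) /
    ((posCount G t p a : ℝ) + (negCountOne G t p a : ℝ)))

/-- A swap of the (distinct) agents `a` and `b` turning placement `p` into `q`,
which strictly decreases the cost of both agents (cost function `c`). -/
def SwapMove (c : (A → V) → A → ℝ) (p q : A → V) (a b : A) : Prop :=
  a ≠ b ∧ q = p ∘ (Equiv.swap a b) ∧ c q a < c p a ∧ c q b < c p b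

/-- `q` is obtained from `p` by an improving swap. -/
def ImprovingSwap (c : (A → V) → A → ℝ) (p q : A → V) : Prop :=
  ∃ a b, SwapMove c p q a b

/-- A placement is swap-stable if it admits no improving swap. -/
def SwapStable (c : (A → V) → A → ℝ) (p : A → V) : Prop :=
  ∀ q, ¬ ImprovingSwap c p q

/-- Some finite sequence of improving swaps starting at `p₀` ends in a swap-stable placement. -/
def ReachesStableSwap (c : (A → V) → A → ℝ) (p₀ : A → V) : Prop :=
  ∃ (n : ℕ) (q : ℕ → A → V), q 0 = p₀ ∧
    (∀ i < n, ImprovingSwap c (q i) (q (i + 1))) ∧ SwapStable c (q n)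

/-- A jump of agent `a` to the node `v` (unoccupied under `p`) turning placement `p`
into `q`, which strictly decreases the cost of `a` (cost function `c`). -/
def JumpMove (c : (A → V) → A → ℝ) (p q : A → V) (a : A) (v : V) : Prop :=
  (∀ b, p b ≠ v) ∧ q = Function.update p a v ∧ c q a < c p a

/-- `q` is obtained from `p` by an improving jump. -/
def ImprovingJump (c : (A → V) → A → ℝ) (p q : A → V) : Prop :=
  ∃ a v, JumpMove c p q a v

/-- A placement is jump-stable if it admits no improving jump. -/
def JumpStable (c : (A → V) → A → ℝ) (p : A → V) : Prop :=
  ∀ q, ¬ ImprovingJump c p q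

/-- Some finite sequence of improving jumps starting at `p₀` ends in a jump-stable placement. -/
def ReachesStableJump (c : (A → V) → A → ℝ) (p₀ : A → V) : Prop :=
  ∃ (n : ℕ) (q : ℕ → A → V), q 0 = p₀ ∧
    (∀ i < n, ImprovingJump c (q i) (q (i + 1))) ∧ JumpStable c (q n)

/-- The placement cost: the number of discontent agents (one-versus-all cost). -/
def placementCost (G : SimpleGraph V) (t : A → Fin k) (τ : ℝ) (p : A → V) : ℕ :=
  (Finset.univ.filter fun a => costAll G t τ p a ≠ 0).card

/-- A graph is `Δ`-regular if every node has exactly `Δ` neighbors. -/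
def IsRegular (G : SimpleGraph V) (Δ : ℕ) : Prop :=
  ∀ v : V, (Finset.univ.filter fun u => G.Adj v u).card = Δ

section Regularization

variable {V W : Type*}

/-- The box product in which the second factor may depend on the vertex of the first factor:
`R v` is the graph placed on the fiber over `v`. -/
def fiberwiseProd (G : SimpleGraph V) (R : V → SimpleGraph W) : SimpleGraph (V × W) where
  Adj x y := G.Adj x.1 y.1 ∧ x.2 = y.2 ∨ (R x.1).Adj x.2 y.2 ∧ x.1 = y.1
  symm := ⟨by
    rintro ⟨v, s⟩ ⟨w, r⟩ (⟨hvw, rfl⟩ | ⟨hsr, rfl⟩)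
    · exact Or.inl ⟨hvw.symm, rfl⟩
    · exact Or.inr ⟨hsr.symm, rfl⟩⟩
  loopless := ⟨by simp⟩

lemma fiberwiseProd_adj {G : SimpleGraph V} {R : V → SimpleGraph W} {x y : V × W} :
    (fiberwiseProd G R).Adj x y ↔ G.Adj x.1 y.1 ∧ x.2 = y.2 ∨ (R x.1).Adj x.2 y.2 ∧ x.1 = y.1 :=
  Iff.rfl

lemma degree_fiberwiseProd [Fintype V] [Fintype W] (G : SimpleGraph V) (R : V → SimpleGraph W)
    (x : V × W) : (fiberwiseProd G R).degree x = G.degree x.1 + (R x.1).degree x.2 := by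
  have hdisj : Disjoint (G.neighborFinset x.1 ×ˢ {x.2}) ({x.1} ×ˢ (R x.1).neighborFinset x.2) :=
    disjoint_product.mpr (Or.inl (SimpleGraph.neighborFinset_disjoint_singleton _ _))
  have hnbrs : (fiberwiseProd G R).neighborFinset x =
      G.neighborFinset x.1 ×ˢ {x.2} ∪ {x.1} ×ˢ (R x.1).neighborFinset x.2 := by
    ext ⟨w, r⟩
    simp [fiberwiseProd_adj, eq_comm, and_comm]
  rw [← SimpleGraph.card_neighborFinset_eq_degree, hnbrs, card_union_of_disjoint hdisj]
  simp

/-- The embedding of the first factor of a fiberwise product as the slice over `s`. -/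
def fiberwiseProdSlice (G : SimpleGraph V) (R : V → SimpleGraph W) (s : W) :
    G ↪g fiberwiseProd G R where
  toFun v := (v, s)
  inj' _ _ h := congrArg Prod.fst h
  map_rel_iff' {v w} := by
    change (fiberwiseProd G R).Adj (v, s) (w, s) ↔ G.Adj v w
    simp [fiberwiseProd_adj]

/-- The subgraph of the `n`-dimensional hypercube, on the subsets of `Fin n`, that keeps only the
edges in the first `d` directions. -/
def partialCube (n d : ℕ) : SimpleGraph (Finset (Fin n)) where
  Adj s r := ∃ i : Fin n, i < d ∧ symmDiff s r = {i}
  symm := ⟨fun s r ⟨i, hi, h⟩ => ⟨i, hi, by rwa [symmDiff_comm]⟩⟩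
  loopless := ⟨fun s ⟨i, _, h⟩ => singleton_ne_empty i (by simpa using h.symm)⟩

lemma partialCube_adj {n d : ℕ} {s r : Finset (Fin n)} :
    (partialCube n d).Adj s r ↔ ∃ i : Fin n, i < d ∧ symmDiff s r = {i} :=
  Iff.rfl

lemma degree_partialCube {n d : ℕ} (hd : d ≤ n) (s : Finset (Fin n)) :
    (partialCube n d).degree s = d := by
  have hnbrs : (partialCube n d).neighborFinset s =
      ({i : Fin n | i < d} : Finset (Fin n)).image fun i => symmDiff s {i} := by
    ext r
    have hflip (i : Fin n) : symmDiff s r = {i} ↔ symmDiff s {i} = r := by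
      constructor <;> intro h <;> simp [← h]
    simp [partialCube_adj, hflip]
  have hinj : Function.Injective fun i : Fin n => symmDiff s {i} :=
    (symmDiff_right_injective s).comp (singleton_injective (α := Fin n))
  rw [← SimpleGraph.card_neighborFinset_eq_degree, hnbrs, card_image_of_injective _ hinj,
    Fin.card_filter_val_lt, min_eq_right hd]

lemma isRegular_iff_isRegularOfDegree [Fintype V] (G : SimpleGraph V) (Δ : ℕ) :
    IsRegular G Δ ↔ G.IsRegularOfDegree Δ :=
  forall_congr' fun v => by
    rw [← SimpleGraph.card_neighborFinset_eq_degree, SimpleGraph.neighborFinset_eq_filter]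

theorem exists_isRegular_embedding [Fintype V] (G : SimpleGraph V) {Δ : ℕ}
    (hG : ∀ v, G.degree v ≤ Δ) :
    ∃ (N : ℕ) (G' : SimpleGraph (Fin N)), IsRegular G' Δ ∧ Nonempty (G ↪g G') := by
  let P := fiberwiseProd G fun v => partialCube Δ (Δ - G.degree v)
  let φ : P ≃g P.overFin rfl := P.overFinIso rfl
  refine ⟨_, P.overFin rfl, (isRegular_iff_isRegularOfDegree _ _).mpr fun v => ?_,
    ⟨φ.toEmbedding.comp (fiberwiseProdSlice G _ ∅)⟩⟩
  rw [← φ.symm.degree_eq v, degree_fiberwiseProd, degree_partialCube (Nat.sub_le _ _),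
    Nat.add_sub_cancel' (hG _)]

end Regularization

section Cost

variable {V B : Type*} [Fintype B] {k : ℕ} {G : SimpleGraph V} {t : B → Fin k} {τ : ℝ}
  {p q : B → V} {a : B}

/-- The fraction of the neighbors of `a` under `p` that have the type of `a`. For an agent without
neighbors, the convention `0 / 0 = 0` makes it agree with the cost `τ` of such an agent. -/
def sameTypeRatio (G : SimpleGraph V) (t : B → Fin k) (p : B → V) (a : B) : ℝ :=
  posCount G t p a / #(nbrs G p a)

lemma mem_nbrs {b : B} : b ∈ nbrs G p a ↔ G.Adj (p a) (p b) :=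
  mem_filter_univ b

lemma posCount_eq_card_filter_nbrs : posCount G t p a = #{b ∈ nbrs G p a | t b = t a} := by
  rw [posCount, nbrs, filter_filter]

lemma posCount_add_negCountAll : posCount G t p a + negCountAll G t p a = #(nbrs G p a) := by
  rw [posCount_eq_card_filter_nbrs, negCountAll, ← filter_filter]
  exact card_filter_add_card_filter_not _

lemma costAll_eq_max (hτ : 0 ≤ τ) :
    costAll G t τ p a = max 0 (τ - sameTypeRatio G t p a) := by
  rw [costAll, ← Nat.cast_add, posCount_add_negCountAll, sameTypeRatio]
  split_ifs with h
  · simp [h, hτ]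
  · rfl

lemma improvingJump_of_sameTypeRatio_lt [DecidableEq B] {v : V} (hv : ∀ b, p b ≠ v)
    (hq : q = Function.update p a v) (hτ : sameTypeRatio G t p a < τ)
    (hlt : sameTypeRatio G t p a < sameTypeRatio G t q a) :
    ImprovingJump (costAll G t τ) p q := by
  have hratio : 0 ≤ sameTypeRatio G t p a := by unfold sameTypeRatio; positivity
  refine ⟨a, v, hv, by convert hq, ?_⟩
  rw [costAll_eq_max (hratio.trans hτ.le), costAll_eq_max (hratio.trans hτ.le)]
  exact max_lt (lt_max_of_lt_right (sub_pos.mpr hτ)) (lt_max_of_lt_right (sub_lt_sub_left hlt τ))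

end Cost

section ImprovingCycle

variable {V W B C : Type*} {k : ℕ}

/-- The first `ℓ` moves of `q` form an improving response cycle for the cost function `c`. Only
`q 0` is required to be injective, since jumps to unoccupied nodes preserve injectivity. -/
def IsImprovingCycle (c : (B → V) → B → ℝ) (ℓ : ℕ) (q : ℕ → B → V) : Prop :=
  1 ≤ ℓ ∧ Function.Injective (q 0) ∧ q ℓ = q 0 ∧ ∀ i < ℓ, ImprovingJump c (q i) (q (i + 1))

lemma IsImprovingCycle.card_lt [Fintype V] [Fintype B] {c : (B → V) → B → ℝ} {ℓ : ℕ}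
    {q : ℕ → B → V} (h : IsImprovingCycle c ℓ q) : Fintype.card B < Fintype.card V := by
  obtain ⟨hℓ, hinj, -, hjump⟩ := h
  obtain ⟨_, v, hv, -⟩ := hjump 0 hℓ
  exact Fintype.card_lt_of_injective_of_notMem (q 0) hinj (b := v) fun ⟨b, hb⟩ => hv b hb

variable [Fintype B] [Fintype C] {G : SimpleGraph V} {G' : SimpleGraph W} {t : B → Fin k} {τ : ℝ}

lemma costAll_embedding_comp (φ : G ↪g G') (e : C ≃ B) (p : B → V) (a : C) :
    costAll G' (t ∘ e) τ (φ ∘ p ∘ e) a = costAll G t τ p (e a) := by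
  have hpos : posCount G' (t ∘ e) (φ ∘ p ∘ e) a = posCount G t p (e a) :=
    card_equiv e (by simp)
  have hneg : negCountAll G' (t ∘ e) (φ ∘ p ∘ e) a = negCountAll G t p (e a) :=
    card_equiv e (by simp)
  simp only [costAll, ← card_eq_zero, ← posCount_add_negCountAll (t := t),
    ← posCount_add_negCountAll (t := t ∘ e), hpos, hneg]

lemma ImprovingJump.embedding_comp (φ : G ↪g G') (e : C ≃ B) {p q : B → V}
    (h : ImprovingJump (costAll G t τ) p q) :
    ImprovingJump (costAll G' (t ∘ e) τ) (φ ∘ p ∘ e) (φ ∘ q ∘ e) := by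
  obtain ⟨a, v, hv, rfl, hcost⟩ := h
  refine ⟨e.symm a, φ v, fun b hb => hv (e b) (φ.injective hb), ?_, ?_⟩
  · rw [Function.update_comp_equiv, Function.comp_update]
  · simpa only [costAll_embedding_comp, e.apply_symm_apply] using hcost

lemma IsImprovingCycle.embedding_comp (φ : G ↪g G') (e : C ≃ B) {ℓ : ℕ} {q : ℕ → B → V}
    (h : IsImprovingCycle (costAll G t τ) ℓ q) :
    IsImprovingCycle (costAll G' (t ∘ e) τ) ℓ fun i => φ ∘ q i ∘ e := by
  obtain ⟨hℓ, hinj, hclosed, hjump⟩ := h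
  exact ⟨hℓ, φ.injective.comp (hinj.comp e.injective), congrArg (φ ∘ · ∘ e) hclosed,
    fun i hi => (hjump i hi).embedding_comp φ e⟩

theorem IsImprovingCycle.exists_isRegular [Fintype V] {Δ ℓ : ℕ} {q : ℕ → B → V}
    (hq : IsImprovingCycle (costAll G t τ) ℓ q) (hG : ∀ v, G.degree v ≤ Δ)
    (ht : Function.Surjective t) :
    ∃ (N M : ℕ) (G' : SimpleGraph (Fin N)) (t' : Fin M → Fin k),
      IsRegular G' Δ ∧ M < N ∧ Function.Surjective t' ∧
      ∃ (ℓ : ℕ) (q' : ℕ → Fin M → Fin N), IsImprovingCycle (costAll G' t' τ) ℓ q' := by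
  obtain ⟨N, G', hG', ⟨φ⟩⟩ := exists_isRegular_embedding G hG
  let e := (Fintype.equivFin B).symm
  have hcycle := hq.embedding_comp φ e
  exact ⟨N, _, G', t ∘ e, hG', by simpa using hcycle.card_lt, ht.comp e.surjective, ℓ, _, hcycle⟩

end ImprovingCycle

section Rotation

/-- The graph on the cyclically ordered nodes `ZMod 4` with the two edges `{1, 2}` and `{3, 0}`. -/
def pairing : SimpleGraph (ZMod 4) :=
  SimpleGraph.fromRel fun u v => Odd u.val ∧ v = u + 1

/-- The placement of three agents, numbered cyclically, on the nodes `ZMod 4` that leaves the node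
`h` empty and puts the agents `c`, `c + 1`, `c + 2` on `h + 1`, `h + 2`, `h + 3`. -/
def rotation (h : ZMod 4) (c : ZMod 3) : ZMod 3 → ZMod 4 :=
  fun i => h + 1 + ((i - c).val : ZMod 4)

lemma pairing_adj {u v : ZMod 4} :
    pairing.Adj u v ↔ Odd u.val ∧ v = u + 1 ∨ Odd v.val ∧ u = v + 1 := by
  rw [pairing, SimpleGraph.fromRel_adj]
  revert u v
  decide

lemma degree_pairing (u : ZMod 4) : pairing.degree u = 1 := by
  have hpartner : ∃ v, ∀ w, pairing.Adj u w ↔ w = v := by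
    simp only [pairing_adj]
    revert u
    decide
  rw [SimpleGraph.degree_eq_one_iff_existsUnique_adj]
  obtain ⟨v, hv⟩ := hpartner
  exact ⟨v, (hv v).mpr rfl, fun w => (hv w).mp⟩

lemma rotation_injective (h : ZMod 4) (c : ZMod 3) : Function.Injective (rotation h c) := by
  revert h c
  decide

lemma rotation_ne (h : ZMod 4) (c i : ZMod 3) : rotation h c i ≠ h := by
  revert h c i
  decide

lemma rotation_self (h : ZMod 4) (c : ZMod 3) : rotation h c c = h + 1 := by
  simp [rotation]

lemma rotation_succ (h : ZMod 4) (c : ZMod 3) :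
    rotation (h + 1) (c + 1) = Function.update (rotation h c) c h := by
  have hcases : ∀ h c i, rotation (h + 1) (c + 1) i = if i = c then h else rotation h c i := by
    decide
  funext i
  rw [hcases, Function.update_apply]

lemma rotation_succ_self (h : ZMod 4) (c : ZMod 3) : rotation (h + 1) (c + 1) c = h := by
  rw [rotation_succ, Function.update_self]

lemma nbrs_rotation_of_even {h : ZMod 4} (hh : Even h.val) (c : ZMod 3) :
    nbrs pairing (rotation h c) c = {c + 1} := by
  ext i
  simp only [mem_nbrs, pairing_adj, mem_singleton]
  revert h c i
  decide

lemma nbrs_rotation_of_odd {h : ZMod 4} (hh : Odd h.val) (c : ZMod 3) :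
    nbrs pairing (rotation h c) c = ∅ := by
  ext i
  simp only [mem_nbrs, pairing_adj, notMem_empty]
  revert h c i
  decide

lemma nbrs_rotation_succ_of_even {h : ZMod 4} (hh : Even h.val) (c : ZMod 3) :
    nbrs pairing (rotation (h + 1) (c + 1)) c = {c - 1} := by
  ext i
  simp only [mem_nbrs, pairing_adj, mem_singleton]
  revert h c i
  decide

lemma nbrs_rotation_succ_of_odd {h : ZMod 4} (hh : Odd h.val) (c : ZMod 3) :
    nbrs pairing (rotation (h + 1) (c + 1)) c = ∅ := by
  ext i
  simp only [mem_nbrs, pairing_adj, notMem_empty]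
  revert h c i
  decide

end Rotation

section Carousel

variable {S : Type*} {k : ℕ}

/-- The graph `pairing` with an additional node for each element of `S`, adjacent to the hubs,
which are the odd nodes of `pairing`. -/
def carousel (S : Type*) : SimpleGraph (ZMod 4 ⊕ S) where
  Adj
    | .inl u, .inl v => pairing.Adj u v
    | .inl u, .inr _ => Odd u.val
    | .inr _, .inl v => Odd v.val
    | .inr _, .inr _ => False
  symm := ⟨by rintro (u | x) (v | y) h <;> first | exact h | exact SimpleGraph.Adj.symm h⟩
  loopless := ⟨by rintro (u | x) h <;> first | exact h | exact SimpleGraph.irrefl _ h⟩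

lemma carousel_adj_inl_inl {u v : ZMod 4} :
    (carousel S).Adj (.inl u) (.inl v) ↔ pairing.Adj u v :=
  Iff.rfl

lemma carousel_adj_inl_inr {u : ZMod 4} {x : S} :
    (carousel S).Adj (.inl u) (.inr x) ↔ Odd u.val :=
  Iff.rfl

lemma carousel_adj_inr_inl {v : ZMod 4} {x : S} :
    (carousel S).Adj (.inr x) (.inl v) ↔ Odd v.val :=
  Iff.rfl

lemma carousel_adj_inr_inr {x y : S} : ¬ (carousel S).Adj (.inr x) (.inr y) :=
  id

/-- Three mobile agents of type `c`, and the stationary agents `S` with types given by `t`. -/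
def carouselType (c : Fin k) (t : S → Fin k) : ZMod 3 ⊕ S → Fin k :=
  Sum.elim (fun _ => c) t

/-- The placement of the mobile agents by `f`, each stationary agent being on her own node. -/
def carouselPlacement (f : ZMod 3 → ZMod 4) : ZMod 3 ⊕ S → ZMod 4 ⊕ S :=
  Sum.map f id

lemma carouselPlacement_update (f : ZMod 3 → ZMod 4) (i : ZMod 3) (v : ZMod 4) :
    (carouselPlacement (Function.update f i v) : ZMod 3 ⊕ S → ZMod 4 ⊕ S) =
      Function.update (carouselPlacement f) (.inl i) (.inl v) := by
  ext (j | x) : 1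
  · by_cases hj : j = i <;> simp [carouselPlacement, hj]
  · simp [carouselPlacement]

variable [Fintype S] {t : S → Fin k} {c : Fin k} {f : ZMod 3 → ZMod 4} {i : ZMod 3}

lemma degree_carousel_le {Δ : ℕ} (hΔ : 2 ≤ Δ) (hS : Fintype.card S + 1 ≤ Δ) (v : ZMod 4 ⊕ S) :
    (carousel S).degree v ≤ Δ := by
  rcases v with u | x
  · have hnbrs : (carousel S).neighborFinset (.inl u) ⊆
        (pairing.neighborFinset u).disjSum univ := by
      rintro (v | x) <;> simp [carousel_adj_inl_inl]
    have hcard := card_le_card hnbrs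
    rw [card_disjSum, SimpleGraph.card_neighborFinset_eq_degree,
      SimpleGraph.card_neighborFinset_eq_degree, degree_pairing, card_univ] at hcard
    omega
  · have hnbrs : (carousel S).neighborFinset (.inr x) ⊆ ({1, 3} : Finset (ZMod 4)).disjSum ∅ := by
      rintro (v | y)
      · have hodd : ∀ v : ZMod 4, Odd v.val → v = 1 ∨ v = 3 := by decide
        simpa [carousel_adj_inr_inl] using hodd v
      · simp [carousel_adj_inr_inr]
    exact (card_le_card hnbrs).trans hΔ

lemma nbrs_carousel : nbrs (carousel S) (carouselPlacement f) (.inl i) =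
    (nbrs pairing f i).disjSum {_x | Odd (f i).val} := by
  ext (j | x)
  · simp [mem_nbrs, carouselPlacement, carousel_adj_inl_inl]
  · simp only [mem_nbrs, carouselPlacement, Sum.map_inl, Sum.map_inr, carousel_adj_inl_inr,
      inr_mem_disjSum, mem_filter_univ]

lemma posCount_carousel :
    posCount (carousel S) (carouselType c t) (carouselPlacement f) (.inl i) =
      #(nbrs pairing f i) + #{x | Odd (f i).val ∧ t x = c} := by
  rw [posCount_eq_card_filter_nbrs, nbrs_carousel, ← card_disjSum]
  congr 1
  ext (j | x)
  · simp [carouselType]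
  · rw [mem_filter, inr_mem_disjSum, inr_mem_disjSum, mem_filter_univ, mem_filter_univ]
    rfl

lemma sameTypeRatio_of_odd (hf : Odd (f i).val) :
    sameTypeRatio (carousel S) (carouselType c t) (carouselPlacement f) (.inl i) =
      (#(nbrs pairing f i) + #{x | t x = c}) / (#(nbrs pairing f i) + Fintype.card S) := by
  simp [sameTypeRatio, nbrs_carousel, posCount_carousel, hf]

lemma sameTypeRatio_of_even (hf : Even (f i).val) :
    sameTypeRatio (carousel S) (carouselType c t) (carouselPlacement f) (.inl i) =
      #(nbrs pairing f i) / #(nbrs pairing f i) := by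
  simp [sameTypeRatio, nbrs_carousel, posCount_carousel, Nat.not_odd_iff_even.mpr hf]

lemma improvingJump_rotation_of_sameTypeRatio_lt {τ : ℝ} {h : ZMod 4}
    (hτ : sameTypeRatio (carousel S) (carouselType c t) (carouselPlacement (rotation h i))
      (.inl i) < τ)
    (hlt : sameTypeRatio (carousel S) (carouselType c t) (carouselPlacement (rotation h i))
      (.inl i) < sameTypeRatio (carousel S) (carouselType c t)
        (carouselPlacement (rotation (h + 1) (i + 1))) (.inl i)) :
    ImprovingJump (costAll (carousel S) (carouselType c t) τ)
      (carouselPlacement (rotation h i)) (carouselPlacement (rotation (h + 1) (i + 1))) := by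
  refine improvingJump_of_sameTypeRatio_lt (v := .inl h) ?_ ?_ hτ hlt
  · rintro (j | x)
    · simpa [carouselPlacement] using rotation_ne h i j
    · simp [carouselPlacement]
  · rw [rotation_succ, carouselPlacement_update]

lemma improvingJump_rotation {τ : ℝ} (hfriend : ∃ x, t x = c) (hfoe : ∃ x, t x ≠ c)
    (hτ : (1 + #{x | t x = c} : ℝ) / (1 + Fintype.card S) < τ) (h : ZMod 4) (i : ZMod 3) :
    ImprovingJump (costAll (carousel S) (carouselType c t) τ)
      (carouselPlacement (rotation h i)) (carouselPlacement (rotation (h + 1) (i + 1))) := by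
  have hpos : 0 < #{x | t x = c} := card_pos.mpr (by simpa [Finset.Nonempty] using hfriend)
  have hcard : #{x | t x = c} < Fintype.card S := by
    obtain ⟨x, hx⟩ := hfoe
    exact card_lt_univ_of_notMem (x := x) (by simpa using hx)
  rcases Nat.even_or_odd h.val with heven | hodd
  · have hbefore := sameTypeRatio_of_odd (c := c) (t := t) (f := rotation h i) (i := i)
      (by rw [rotation_self]; revert h; decide)
    have hafter := sameTypeRatio_of_even (c := c) (t := t) (f := rotation (h + 1) (i + 1)) (i := i)
      (by rwa [rotation_succ_self])
    rw [nbrs_rotation_of_even heven, card_singleton, Nat.cast_one] at hbefore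
    rw [nbrs_rotation_succ_of_even heven, card_singleton, Nat.cast_one, div_one] at hafter
    apply improvingJump_rotation_of_sameTypeRatio_lt
    · rwa [hbefore]
    · rw [hbefore, hafter, div_lt_one (by positivity)]
      gcongr
  · have hbefore := sameTypeRatio_of_even (c := c) (t := t) (f := rotation h i) (i := i)
      (by rw [rotation_self]; revert h; decide)
    have hafter := sameTypeRatio_of_odd (c := c) (t := t) (f := rotation (h + 1) (i + 1)) (i := i)
      (by rwa [rotation_succ_self])
    rw [nbrs_rotation_of_odd hodd, card_empty, Nat.cast_zero, div_zero] at hbefore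
    rw [nbrs_rotation_succ_of_odd hodd, card_empty, Nat.cast_zero, zero_add, zero_add] at hafter
    apply improvingJump_rotation_of_sameTypeRatio_lt
    · rw [hbefore]
      exact lt_of_le_of_lt (by positivity) hτ
    · rw [hbefore, hafter]
      have hS : 0 < Fintype.card S := hpos.trans hcard
      positivity

theorem isImprovingCycle_rotation {τ : ℝ} (hfriend : ∃ x, t x = c) (hfoe : ∃ x, t x ≠ c)
    (hτ : (1 + #{x | t x = c} : ℝ) / (1 + Fintype.card S) < τ) :
    IsImprovingCycle (costAll (carousel S) (carouselType c t) τ) 12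
      fun n => carouselPlacement (rotation n n) := by
  refine ⟨by norm_num, ?_, ?_, fun n _ => ?_⟩
  · exact Sum.map_injective.mpr ⟨rotation_injective _ _, Function.injective_id⟩
  · rfl
  · push_cast
    exact improvingJump_rotation hfriend hfoe hτ n n

end Carousel

theorem statement7_general (Δ : ℕ) (hΔ : 3 ≤ Δ) (τ : ℝ) (hτ : 2 / (Δ : ℝ) < τ) :
    ∃ (N M : ℕ) (G : SimpleGraph (Fin N)) (t : Fin M → Fin 2),
      IsRegular G Δ ∧ M < N ∧ Function.Surjective t ∧
      ∃ (ℓ : ℕ) (q : ℕ → Fin M → Fin N), 1 ≤ ℓ ∧ Function.Injective (q 0) ∧ q ℓ = q 0 ∧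
        ∀ i < ℓ, ImprovingJump (costAll G t τ) (q i) (q (i + 1)) := by
  obtain ⟨m, rfl⟩ := Nat.exists_eq_add_of_le' hΔ
  let t : Fin (m + 2) → Fin 2 := Fin.cons 0 fun _ => 1
  have hfriends : #{x | t x = 0} = 1 := by
    simp [t, Fin.card_filter_univ_succ]
  have hcycle : IsImprovingCycle (costAll (carousel _) (carouselType 0 t) τ) 12
      fun n => carouselPlacement (rotation n n) := by
    refine isImprovingCycle_rotation ⟨0, rfl⟩ ⟨1, by simp [t]⟩ ?_
    convert hτ using 2
    · norm_num [hfriends]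
    · rw [Fintype.card_fin]; push_cast; ring
  refine hcycle.exists_isRegular (degree_carousel_le (by omega) (by simp)) fun j => ?_
  fin_cases j
  · exact ⟨.inl 0, rfl⟩
  · exact ⟨.inr 1, rfl⟩

/-- For every `Δ ≥ 3` and every `2/Δ < τ < 1` there are a `Δ`-regular graph, two
surjectively used agent types on `|A| < |V|` agents and an improving response cycle for
the `1`-`k`-JSG with parameter `τ`; in particular this game is no potential game. -/
theorem statement7 (Δ : ℕ) (hΔ : 3 ≤ Δ) (τ : ℝ) (hτ1 : 2 / (Δ : ℝ) < τ) (hτ2 : τ < 1) :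
    ∃ (N M : ℕ) (G : SimpleGraph (Fin N)) (t : Fin M → Fin 2),
      IsRegular G Δ ∧ M < N ∧ Function.Surjective t ∧
      ∃ (ℓ : ℕ) (q : ℕ → Fin M → Fin N), 1 ≤ ℓ ∧ Function.Injective (q 0) ∧ q ℓ = q 0 ∧
        ∀ i < ℓ, ImprovingJump (costAll G t τ) (q i) (q (i + 1)) :=
  statement7_general Δ hΔ τ hτ1

end Schelling
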